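/- Let 0 < α < 1 and z ≥ 1/2, and let ρ, σ be nonzero n×n positive semidefinite complex matrices. Then Q_{α,z}(ρ‖σ) = (Tr ρ)^α · (Tr σ)^{1−α} holds if and only if (Tr σ) · ρ = (Tr ρ) · σ, i.e., the normalized matrices ρ/Tr ρ and σ/Tr σ coincide. -/

import Mathlib

open Matrix
open scoped ComplexOrder

/-- Real power of a positive semidefinite matrix via the spectral decomposition,
applying `x ^ t` (real `rpow`, so with the convention `0 ^ t = 0` for `t ≠ 0`)
to the eigenvalues; returns `0` if the matrix is not Hermitian. -/
noncomputable def mpow {n : Type*} [Fintype n] [DecidableEq n]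
    (A : Matrix n n ℂ) (t : ℝ) : Matrix n n ℂ :=
  if hA : A.IsHermitian then
    (hA.eigenvectorUnitary : Matrix n n ℂ) *
      Matrix.diagonal (fun i => ((hA.eigenvalues i ^ t : ℝ) : ℂ)) *
      star (hA.eigenvectorUnitary : Matrix n n ℂ)
  else 0


/-- The α-z-Rényi quantity `Q_{α,z}(ρ‖σ) = Tr((σ^((1−α)/2z) ρ^(α/z) σ^((1−α)/2z))^z)`. -/
noncomputable def Qaz {n : Type*} [Fintype n] [DecidableEq n]
    (α z : ℝ) (ρ σ : Matrix n n ℂ) : ℝ :=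
  ((mpow (mpow σ ((1 - α) / (2 * z)) * mpow ρ (α / z) * mpow σ ((1 - α) / (2 * z))) z).trace).re

/-!
Put `a = α / 2z`, `b = (1 - α) / 2z`, `N = (σ ^ b * ρ ^ 2a * σ ^ b) ^ z` and `θ = 1 - a - b ≥ 0`,
and rescale so that `Tr ρ = Tr σ`. By polar decomposition `U * ρ ^ a * σ ^ b = N ^ (a + b)` for
some unitary `U`, so if `Q_{α,z}(ρ‖σ)` equals this trace then the cyclic product
`N ^ θ * U * ρ ^ a * σ ^ b`, whose exponents add up to `1`, is an equality case of Hölder's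
inequality for three positive matrices of equal trace.

At most one of the three exponents exceeds `1 / 2`. Cutting that factor (or `N ^ θ` if there is
none) in two writes the product, up to cyclic order, as `P * Q` with `P` and `Q` each of total
exponent `1 / 2`, and `2 Re Tr (P * Q) ≤ Tr (P * Pᴴ) + Tr (Qᴴ * Q)` leaves two traces of the form
`Tr (X ^ (1 - t) * Y ^ t)`. In eigenbases of `X` and `Y` these are controlled by the scalar AM-GM
inequality: `Tr (X ^ (1 - t) * Y ^ t) ≤ (1 - t) Tr X + t Tr Y`, strictly if `X ≠ Y`. Hence equality
identifies the matrices, up to conjugation by `U`.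
-/

section Trace

variable {n : Type*} [Fintype n] {A : Matrix n n ℂ}

lemma re_trace_conjTranspose (A : Matrix n n ℂ) : Aᴴ.trace.re = A.trace.re := by
  rw [trace_conjTranspose, Complex.star_def, Complex.conj_re]

lemma trace_unitary_conj [DecidableEq n] {U : Matrix n n ℂ} (hU : U ∈ unitaryGroup n ℂ)
    (A : Matrix n n ℂ) : (U * A * Uᴴ).trace = A.trace := by
  rw [trace_mul_cycle, ← star_eq_conjTranspose, mem_unitaryGroup_iff'.1 hU, Matrix.one_mul]

lemma ofReal_re_trace (hA : A.PosSemidef) : (A.trace.re : ℂ) = A.trace :=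
  Complex.ext rfl (Complex.nonneg_iff.1 hA.trace_nonneg).2

lemma re_trace_pos (hA : A.PosSemidef) (hA0 : A ≠ 0) : 0 < A.trace.re := by
  refine (Complex.nonneg_iff.1 hA.trace_nonneg).1.lt_of_ne fun h ↦ hA0 ?_
  rw [← hA.trace_eq_zero_iff, ← ofReal_re_trace hA, ← h, Complex.ofReal_zero]

end Trace

section Powers

variable {n : Type*} [Fintype n] [DecidableEq n] {A : Matrix n n ℂ} {s t : ℝ}

lemma mpow_eq_cfc (hA : A.IsHermitian) (t : ℝ) : mpow A t = cfc (fun x : ℝ ↦ x ^ t) A := by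
  rw [mpow, dif_pos hA, hA.cfc_eq, IsHermitian.cfc, Unitary.conjStarAlgAut_apply]
  rfl

lemma mpow_one (hA : A.IsHermitian) : mpow A 1 = A := by
  simp only [mpow_eq_cfc hA, Real.rpow_one]
  exact cfc_id' ℝ A hA

lemma mpow_zero (hA : A.IsHermitian) : mpow A 0 = 1 := by
  simp only [mpow_eq_cfc hA, Real.rpow_zero]
  exact cfc_const_one ℝ A hA

lemma posSemidef_mpow (hA : A.PosSemidef) (t : ℝ) : (mpow A t).PosSemidef := by
  rw [mpow, dif_pos hA.isHermitian]
  refine PosSemidef.mul_mul_conjTranspose_same (PosSemidef.diagonal fun i ↦ ?_) _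
  exact Complex.zero_le_real.2 (Real.rpow_nonneg (hA.eigenvalues_nonneg i) t)

lemma conjTranspose_mpow (hA : A.PosSemidef) (t : ℝ) : (mpow A t)ᴴ = mpow A t :=
  (posSemidef_mpow hA t).isHermitian

open scoped MatrixOrder in
lemma spectrum_real_nonneg (hA : A.PosSemidef) {x : ℝ} (hx : x ∈ spectrum ℝ A) : 0 ≤ x :=
  spectrum_nonneg_of_nonneg hA.nonneg hx

lemma mpow_add (hA : A.PosSemidef) (hs : 0 ≤ s) (ht : 0 ≤ t) :
    mpow A (s + t) = mpow A s * mpow A t := by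
  simp only [mpow_eq_cfc hA.isHermitian]
  rw [← cfc_mul _ _ A (finite_real_spectrum.continuousOn _) (finite_real_spectrum.continuousOn _)]
  exact cfc_congr fun x hx ↦ Real.rpow_add_of_nonneg (spectrum_real_nonneg hA hx) hs ht

lemma mpow_half_mul_self (hA : A.PosSemidef) : mpow A (1 / 2) * mpow A (1 / 2) = A := by
  rw [← mpow_add hA (by norm_num) (by norm_num), add_halves, mpow_one hA.isHermitian]

lemma mpow_mpow (hA : A.PosSemidef) (s t : ℝ) : mpow (mpow A s) t = mpow A (s * t) := by
  rw [mpow_eq_cfc (posSemidef_mpow hA s).isHermitian, mpow_eq_cfc hA.isHermitian,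
    mpow_eq_cfc hA.isHermitian,
    ← cfc_comp' (· ^ t) (· ^ s) A ((finite_real_spectrum.image _).continuousOn _)
      (finite_real_spectrum.continuousOn _)
      hA.isHermitian.isSelfAdjoint]
  exact cfc_congr fun x hx ↦ (Real.rpow_mul (spectrum_real_nonneg hA hx) s t).symm

lemma mpow_smul (hA : A.PosSemidef) {c : ℝ} (hc : 0 ≤ c) (t : ℝ) :
    mpow (c • A) t = c ^ t • mpow A t := by
  rw [mpow_eq_cfc (hA.smul hc).isHermitian, mpow_eq_cfc hA.isHermitian,
    ← cfc_comp_const_mul c (· ^ t) A ((finite_real_spectrum.image _).continuousOn _)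
      hA.isHermitian.isSelfAdjoint,
    ← cfc_const_mul _ _ A (finite_real_spectrum.continuousOn _)]
  exact cfc_congr fun x hx ↦ Real.mul_rpow hc (spectrum_real_nonneg hA hx)

lemma mpow_unitary_conj {U : Matrix n n ℂ} (hU : U ∈ unitaryGroup n ℂ) (hA : A.IsHermitian)
    (t : ℝ) : mpow (U * A * Uᴴ) t = U * mpow A t * Uᴴ := by
  have hUA := isHermitian_mul_mul_conjTranspose U hA
  have hcont : Continuous (Unitary.conjStarAlgAut ℝ (Matrix n n ℂ) ⟨U, hU⟩) := by
    change Continuous fun B : Matrix n n ℂ ↦ U * B * star U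
    fun_prop
  rw [mpow_eq_cfc hUA, mpow_eq_cfc hA]
  exact (StarAlgHomClass.map_cfc (Unitary.conjStarAlgAut ℝ (Matrix n n ℂ) ⟨U, hU⟩) (· ^ t) A
    (finite_real_spectrum.continuousOn _) hcont hA.isSelfAdjoint hUA.isSelfAdjoint).symm

end Powers

section TraceYoung

/-- The defect in the weighted AM-GM inequality for `x` and `y` with weights `1 - t` and `t`. -/
noncomputable def youngGap (t x y : ℝ) : ℝ :=
  (1 - t) * x + t * y - x ^ (1 - t) * y ^ t

lemma youngGap_nonneg {t x y : ℝ} (ht0 : 0 ≤ t) (ht1 : t ≤ 1) (hx : 0 ≤ x) (hy : 0 ≤ y) :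
    0 ≤ youngGap t x y :=
  sub_nonneg.2 <|
    Real.geom_mean_le_arith_mean2_weighted (sub_nonneg.2 ht1) ht0 hx hy (sub_add_cancel 1 t)

lemma youngGap_pos {t x y : ℝ} (ht0 : 0 < t) (ht1 : t < 1) (hx : 0 ≤ x) (hy : 0 ≤ y)
    (hxy : x ≠ y) : 0 < youngGap t x y := by
  refine (youngGap_nonneg ht0.le ht1.le hx hy).lt_of_ne' fun h ↦ hxy ?_
  have hiff := Real.geom_mean_eq_arith_mean_weighted_iff_of_pos Finset.univ ![1 - t, t] ![x, y]
    (by simp [Fin.forall_fin_two, ht0, ht1]) (by simp) (by simp [Fin.forall_fin_two, hx, hy])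
  have heq : x ^ (1 - t) * y ^ t = (1 - t) * x + t * y := (sub_eq_zero.1 h).symm
  simpa using hiff.1 (by simpa using heq) 0 (Finset.mem_univ _) 1 (Finset.mem_univ _)

variable {n : Type*} [Fintype n] [DecidableEq n] {X Y : Matrix n n ℂ} {t : ℝ}

/-- The matrix of inner products between the eigenvector bases of `X` and `Y`. -/
noncomputable def overlap (hX : X.IsHermitian) (hY : Y.IsHermitian) : Matrix n n ℂ :=
  (hX.eigenvectorUnitary : Matrix n n ℂ)ᴴ * hY.eigenvectorUnitary

lemma re_trace_diagonal_mul_mul_diagonal_mul (c d : n → ℝ) (G : Matrix n n ℂ) :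
    (diagonal (fun i ↦ (c i : ℂ)) * G * diagonal (fun j ↦ (d j : ℂ)) * Gᴴ).trace.re
      = ∑ i, ∑ j, c i * d j * ‖G i j‖ ^ 2 := by
  simp only [trace, diag_apply, mul_apply (N := Gᴴ), mul_diagonal, diagonal_mul,
    conjTranspose_apply, Complex.re_sum]
  refine Finset.sum_congr rfl fun i _ ↦ Finset.sum_congr rfl fun j _ ↦ ?_
  rw [mul_right_comm, mul_assoc, Complex.star_def, mul_assoc, ← mul_assoc (G i j),
    Complex.mul_conj, Complex.normSq_eq_norm_sq]
  norm_cast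
  ring

lemma re_trace_mpow_mul_mpow_eq_sum (hX : X.IsHermitian) (hY : Y.IsHermitian) (s t : ℝ) :
    (mpow X s * mpow Y t).trace.re
      = ∑ i, ∑ j, hX.eigenvalues i ^ s * hY.eigenvalues j ^ t * ‖overlap hX hY i j‖ ^ 2 := by
  rw [← re_trace_diagonal_mul_mul_diagonal_mul, mpow, mpow, dif_pos hX, dif_pos hY, overlap,
    conjTranspose_mul, conjTranspose_conjTranspose]
  simp only [star_eq_conjTranspose, Matrix.mul_assoc]
  rw [trace_mul_comm]
  simp only [Matrix.mul_assoc]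

lemma trace_sub_eq_sum_youngGap (hX : X.IsHermitian) (hY : Y.IsHermitian) (t : ℝ) :
    (1 - t) * X.trace.re + t * Y.trace.re - (mpow X (1 - t) * mpow Y t).trace.re
      = ∑ i, ∑ j, youngGap t (hX.eigenvalues i) (hY.eigenvalues j) * ‖overlap hX hY i j‖ ^ 2 := by
  have hXtr := re_trace_mpow_mul_mpow_eq_sum hX hY 1 0
  have hYtr := re_trace_mpow_mul_mpow_eq_sum hX hY 0 1
  simp only [mpow_one, mpow_zero, hX, hY, Real.rpow_one,
    Real.rpow_zero, mul_one, one_mul] at hXtr hYtr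
  rw [hXtr, hYtr, re_trace_mpow_mul_mpow_eq_sum hX hY]
  simp only [youngGap, Finset.mul_sum, ← Finset.sum_add_distrib, ← Finset.sum_sub_distrib]
  exact Finset.sum_congr rfl fun i _ ↦ Finset.sum_congr rfl fun j _ ↦ by ring

lemma eq_of_eigenvalues_eq_of_overlap_ne_zero (hX : X.IsHermitian) (hY : Y.IsHermitian)
    (h : ∀ i j, overlap hX hY i j ≠ 0 → hX.eigenvalues i = hY.eigenvalues j) : X = Y := by
  set E := (hX.eigenvectorUnitary : Matrix n n ℂ)
  set F := (hY.eigenvectorUnitary : Matrix n n ℂ)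
  have hEE : E * Eᴴ = 1 := mem_unitaryGroup_iff.1 hX.eigenvectorUnitary.2
  have hFF : F * Fᴴ = 1 := mem_unitaryGroup_iff.1 hY.eigenvectorUnitary.2
  have hcomm : diagonal (fun i ↦ (hX.eigenvalues i : ℂ)) * (Eᴴ * F)
      = Eᴴ * F * diagonal (fun j ↦ (hY.eigenvalues j : ℂ)) := by
    ext i j
    rw [diagonal_mul, mul_diagonal, mul_comm]
    by_cases hij : (Eᴴ * F) i j = 0
    · simp [hij]
    · rw [h i j hij]
  have hXs : X = E * diagonal (fun i ↦ (hX.eigenvalues i : ℂ)) * Eᴴ := hX.spectral_theorem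
  have hYs : Y = F * diagonal (fun j ↦ (hY.eigenvalues j : ℂ)) * Fᴴ := hY.spectral_theorem
  calc X = E * (diagonal (fun i ↦ (hX.eigenvalues i : ℂ)) * (Eᴴ * F)) * Fᴴ := by
        nth_rw 1 [hXs]
        simp only [Matrix.mul_assoc, hFF, Matrix.mul_one]
    _ = (E * Eᴴ) * (F * diagonal (fun j ↦ (hY.eigenvalues j : ℂ)) * Fᴴ) := by
        rw [hcomm]
        simp only [Matrix.mul_assoc]
    _ = Y := by rw [hEE, Matrix.one_mul, ← hYs]

lemma re_trace_mpow_mul_mpow_le (hX : X.PosSemidef) (hY : Y.PosSemidef) (ht0 : 0 ≤ t)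
    (ht1 : t ≤ 1) :
    (mpow X (1 - t) * mpow Y t).trace.re ≤ (1 - t) * X.trace.re + t * Y.trace.re := by
  rw [← sub_nonneg, trace_sub_eq_sum_youngGap hX.isHermitian hY.isHermitian]
  exact Finset.sum_nonneg fun i _ ↦ Finset.sum_nonneg fun j _ ↦ mul_nonneg
    (youngGap_nonneg ht0 ht1 (hX.eigenvalues_nonneg i) (hY.eigenvalues_nonneg j)) (sq_nonneg _)

lemma re_trace_mpow_mul_mpow_lt (hX : X.PosSemidef) (hY : Y.PosSemidef) (ht0 : 0 < t)
    (ht1 : t < 1) (hXY : X ≠ Y) :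
    (mpow X (1 - t) * mpow Y t).trace.re < (1 - t) * X.trace.re + t * Y.trace.re := by
  obtain ⟨i, j, hij, hne⟩ : ∃ i j, overlap hX.isHermitian hY.isHermitian i j ≠ 0 ∧
      hX.isHermitian.eigenvalues i ≠ hY.isHermitian.eigenvalues j := by
    contrapose! hXY
    exact eq_of_eigenvalues_eq_of_overlap_ne_zero _ _ hXY
  have hterm (k l : n) : 0 ≤ youngGap t (hX.isHermitian.eigenvalues k)
      (hY.isHermitian.eigenvalues l) * ‖overlap hX.isHermitian hY.isHermitian k l‖ ^ 2 :=
    mul_nonneg (youngGap_nonneg ht0.le ht1.le (hX.eigenvalues_nonneg k) (hY.eigenvalues_nonneg l))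
      (sq_nonneg _)
  rw [← sub_pos, trace_sub_eq_sum_youngGap hX.isHermitian hY.isHermitian]
  refine Finset.sum_pos' (fun k _ ↦ Finset.sum_nonneg fun l _ ↦ hterm k l)
    ⟨i, Finset.mem_univ i, Finset.sum_pos' (fun l _ ↦ hterm i l) ⟨j, Finset.mem_univ j, ?_⟩⟩
  exact mul_pos (youngGap_pos ht0 ht1 (hX.eigenvalues_nonneg i) (hY.eigenvalues_nonneg j) hne)
    (pow_pos (norm_pos_iff.2 hij) 2)

end TraceYoung

section TraceHolder

lemma re_trace_sub_mul_conjTranspose_sub {m n : Type*} [Fintype m] [Fintype n]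
    (P Q : Matrix m n ℂ) :
    ((P - Q) * (P - Q)ᴴ).trace.re
      = (P * Pᴴ).trace.re + (Q * Qᴴ).trace.re - 2 * (P * Qᴴ).trace.re := by
  have hconj : (Q * Pᴴ).trace.re = (P * Qᴴ).trace.re := by
    rw [← re_trace_conjTranspose, conjTranspose_mul, conjTranspose_conjTranspose]
  rw [conjTranspose_sub, Matrix.sub_mul, Matrix.mul_sub, Matrix.mul_sub]
  simp only [trace_sub, Complex.sub_re, hconj]
  ring

variable {n : Type*} [Fintype n] [DecidableEq n] {X Y W U : Matrix n n ℂ} {s t : ℝ}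

lemma trace_mpow_mul_mpow_mul_conjTranspose (hX : X.PosSemidef) (hY : Y.PosSemidef)
    (hs0 : 0 ≤ s) (hs : s ≤ 1 / 2) :
    ((mpow X (1 / 2 - s) * mpow Y s) * (mpow X (1 / 2 - s) * mpow Y s)ᴴ).trace
      = (mpow X (1 - 2 * s) * mpow Y (2 * s)).trace := by
  rw [show 1 - 2 * s = (1 / 2 - s) + (1 / 2 - s) by ring, two_mul s,
    mpow_add hX (by linarith) (by linarith), mpow_add hY hs0 hs0, conjTranspose_mul,
    conjTranspose_mpow hX, conjTranspose_mpow hY, ← Matrix.mul_assoc, trace_mul_comm]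
  simp only [Matrix.mul_assoc]

lemma trace_holder_gap (hX : X.PosSemidef) (hY : Y.PosSemidef) (hW : W.PosSemidef)
    (hU : U ∈ unitaryGroup n ℂ) (hs0 : 0 ≤ s) (hs : s ≤ 1 / 2) (ht0 : 0 ≤ t) (ht : t ≤ 1 / 2) :
    ((mpow X (1 / 2 - s) * mpow Y s * U - mpow X (1 / 2 - t) * mpow W t) *
        (mpow X (1 / 2 - s) * mpow Y s * U - mpow X (1 / 2 - t) * mpow W t)ᴴ).trace.re
      = (mpow X (1 - 2 * s) * mpow Y (2 * s)).trace.re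
        + (mpow X (1 - 2 * t) * mpow W (2 * t)).trace.re
        - 2 * (mpow X (1 - s - t) * mpow Y s * U * mpow W t).trace.re := by
  have hPP : (mpow X (1 / 2 - s) * mpow Y s * U) * (mpow X (1 / 2 - s) * mpow Y s * U)ᴴ
      = (mpow X (1 / 2 - s) * mpow Y s) * (mpow X (1 / 2 - s) * mpow Y s)ᴴ := by
    have hUU : U * Uᴴ = 1 := mem_unitaryGroup_iff.1 hU
    rw [conjTranspose_mul _ U, Matrix.mul_assoc _ U, ← Matrix.mul_assoc U, hUU, Matrix.one_mul]
  have hPQ : ((mpow X (1 / 2 - s) * mpow Y s * U) * (mpow X (1 / 2 - t) * mpow W t)ᴴ).trace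
      = (mpow X (1 - s - t) * mpow Y s * U * mpow W t).trace := by
    rw [show 1 - s - t = (1 / 2 - t) + (1 / 2 - s) by ring,
      mpow_add hX (by linarith) (by linarith), conjTranspose_mul, conjTranspose_mpow hX,
      conjTranspose_mpow hW, ← Matrix.mul_assoc, trace_mul_comm]
    simp only [Matrix.mul_assoc]
  rw [re_trace_sub_mul_conjTranspose_sub, hPP, hPQ,
    trace_mpow_mul_mpow_mul_conjTranspose hX hY hs0 hs,
    trace_mpow_mul_mpow_mul_conjTranspose hX hW ht0 ht]

lemma trace_holder_equality (hX : X.PosSemidef) (hY : Y.PosSemidef) (hW : W.PosSemidef)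
    (hU : U ∈ unitaryGroup n ℂ) (hs0 : 0 ≤ s) (hs : s ≤ 1 / 2) (ht0 : 0 ≤ t) (ht : t ≤ 1 / 2)
    (hYX : Y.trace = X.trace) (hWX : W.trace = X.trace)
    (h : (mpow X (1 - s - t) * mpow Y s * U * mpow W t).trace.re = X.trace.re) :
    (mpow X (1 - 2 * s) * mpow Y (2 * s)).trace.re = X.trace.re ∧
      (mpow X (1 - 2 * t) * mpow W (2 * t)).trace.re = X.trace.re ∧
      mpow X (1 / 2 - s) * mpow Y s * U = mpow X (1 / 2 - t) * mpow W t := by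
  have hgap := trace_holder_gap hX hY hW hU hs0 hs ht0 ht
  set D := mpow X (1 / 2 - s) * mpow Y s * U - mpow X (1 / 2 - t) * mpow W t with hD
  have hDD : 0 ≤ (D * Dᴴ).trace := (posSemidef_self_mul_conjTranspose D).trace_nonneg
  have hre := (Complex.nonneg_iff.1 hDD).1
  have hY2 := re_trace_mpow_mul_mpow_le hX hY (t := 2 * s) (by linarith) (by linarith)
  have hW2 := re_trace_mpow_mul_mpow_le hX hW (t := 2 * t) (by linarith) (by linarith)
  rw [hYX] at hY2
  rw [hWX] at hW2
  refine ⟨by linarith, by linarith, sub_eq_zero.1 ?_⟩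
  rw [← hD, ← trace_mul_conjTranspose_self_eq_zero_iff]
  exact Complex.ext (by rw [Complex.zero_re]; linarith) (Complex.nonneg_iff.1 hDD).2.symm

lemma eq_of_re_trace_mpow_mul_mpow_eq (hX : X.PosSemidef) (hY : Y.PosSemidef) (ht0 : 0 < t)
    (ht1 : t < 1) (hYX : Y.trace = X.trace)
    (h : (mpow X (1 - t) * mpow Y t).trace.re = X.trace.re) : X = Y := by
  by_contra hne
  have hlt := re_trace_mpow_mul_mpow_lt hX hY ht0 ht1 hne
  rw [hYX] at hlt
  linarith

lemma left_eq_of_trace_holder_equality (hX : X.PosSemidef) (hY : Y.PosSemidef) (hW : W.PosSemidef)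
    (hU : U ∈ unitaryGroup n ℂ) (hs0 : 0 < s) (hs : s < 1 / 2) (ht0 : 0 ≤ t) (ht : t ≤ 1 / 2)
    (hYX : Y.trace = X.trace) (hWX : W.trace = X.trace)
    (h : (mpow X (1 - s - t) * mpow Y s * U * mpow W t).trace.re = X.trace.re) : X = Y :=
  eq_of_re_trace_mpow_mul_mpow_eq hX hY (t := 2 * s) (by linarith) (by linarith) hYX
    (trace_holder_equality hX hY hW hU hs0.le hs.le ht0 ht hYX hWX h).1

lemma mpow_mul_mpow_eq_mpow_half (hX : X.PosSemidef) (hY : Y.PosSemidef) (hs0 : 0 < s)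
    (hs : s ≤ 1 / 2) (hYX : Y.trace = X.trace)
    (h : (mpow X (1 - 2 * s) * mpow Y (2 * s)).trace.re = X.trace.re) :
    mpow X (1 / 2 - s) * mpow Y s = mpow Y (1 / 2) := by
  rcases hs.eq_or_lt with rfl | hlt
  · rw [sub_self, mpow_zero hX.isHermitian, Matrix.one_mul]
  · rw [eq_of_re_trace_mpow_mul_mpow_eq hX hY (by linarith) (by linarith) hYX h,
      ← mpow_add hY (by linarith) hs0.le, sub_add_cancel]

lemma unitary_conj_eq_of_trace_holder_equality (hX : X.PosSemidef) (hY : Y.PosSemidef)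
    (hW : W.PosSemidef) (hU : U ∈ unitaryGroup n ℂ) (hs0 : 0 < s) (hs : s ≤ 1 / 2) (ht0 : 0 < t)
    (ht : t ≤ 1 / 2) (hYX : Y.trace = X.trace) (hWX : W.trace = X.trace)
    (h : (mpow X (1 - s - t) * mpow Y s * U * mpow W t).trace.re = X.trace.re) :
    Uᴴ * Y * U = W := by
  obtain ⟨hXY, hXW, hP⟩ := trace_holder_equality hX hY hW hU hs0.le hs ht0.le ht hYX hWX h
  rw [mpow_mul_mpow_eq_mpow_half hX hY hs0 hs hYX hXY,
    mpow_mul_mpow_eq_mpow_half hX hW ht0 ht hWX hXW] at hP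
  calc Uᴴ * Y * U = (mpow Y (1 / 2) * U)ᴴ * (mpow Y (1 / 2) * U) := by
        nth_rw 1 [← mpow_half_mul_self hY]
        simp only [conjTranspose_mul, conjTranspose_mpow hY, Matrix.mul_assoc]
    _ = W := by rw [hP, conjTranspose_mpow hW, mpow_half_mul_self hW]

end TraceHolder

section Polar

lemma exists_linearIsometryEquiv_apply_eq {𝕜 E F : Type*} [RCLike 𝕜] [AddCommGroup E]
    [Module 𝕜 E] [NormedAddCommGroup F] [InnerProductSpace 𝕜 F] [FiniteDimensional 𝕜 F]
    (f g : E →ₗ[𝕜] F) (h : ∀ x, ‖f x‖ = ‖g x‖) : ∃ u : F ≃ₗᵢ[𝕜] F, ∀ x, u (f x) = g x := by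
  obtain ⟨r, hr⟩ := f.rangeRestrict.exists_rightInverse_of_surjective f.range_rangeRestrict
  have hfr (y : LinearMap.range f) : f (r y) = y := congrArg Subtype.val (LinearMap.congr_fun hr y)
  let L : LinearMap.range f →ₗᵢ[𝕜] F := ⟨g ∘ₗ r, fun y ↦ by simp [← h, hfr]⟩
  refine ⟨L.extend.toLinearIsometryEquiv rfl, fun x ↦ ?_⟩
  have hx : L.extend (f x) = g (r (f.rangeRestrict x)) := L.extend_apply (f.rangeRestrict x)
  rw [LinearIsometry.toLinearIsometryEquiv_apply, hx, ← sub_eq_zero, ← map_sub, ← norm_eq_zero,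
    ← h, map_sub, hfr]
  simp

lemma norm_sq_toEuclideanLin {𝕜 m n : Type*} [RCLike 𝕜] [Fintype m] [Fintype n]
    [DecidableEq n] (A : Matrix m n 𝕜) (x : EuclideanSpace 𝕜 n) :
    ‖toEuclideanLin A x‖ ^ 2 = RCLike.re (inner 𝕜 x (toEuclideanLin (Aᴴ * A) x)) := by
  classical
  rw [toLpLin_mul_same, LinearMap.comp_apply, toEuclideanLin_conjTranspose_eq_adjoint,
    LinearMap.adjoint_inner_right, inner_self_eq_norm_sq]

lemma exists_unitary_mul_eq_of_conjTranspose_mul_self_eq {𝕜 m n : Type*} [RCLike 𝕜] [Fintype m]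
    [DecidableEq m] [Finite n] {A B : Matrix m n 𝕜} (h : Aᴴ * A = Bᴴ * B) :
    ∃ U ∈ unitaryGroup m 𝕜, U * A = B := by
  classical
  have := Fintype.ofFinite n
  obtain ⟨u, hu⟩ := exists_linearIsometryEquiv_apply_eq (toEuclideanLin A) (toEuclideanLin B)
    fun x ↦ by
      rw [← sq_eq_sq₀ (norm_nonneg _) (norm_nonneg _), norm_sq_toEuclideanLin,
        norm_sq_toEuclideanLin, h]
  let b := EuclideanSpace.basisFun m 𝕜
  have hU : toEuclideanLin (LinearMap.toMatrix b.toBasis b.toBasis u.toLinearEquiv)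
      = u.toLinearEquiv := by
    rw [toEuclideanLin_eq_toLin_orthonormal]
    exact toLin_toMatrix _ _ _
  refine ⟨_, u.toMatrix_mem_unitaryGroup b b, toEuclideanLin.injective <| LinearMap.ext fun x ↦ ?_⟩
  rw [toLpLin_mul_same, LinearMap.comp_apply, hU, ← hu]
  rfl

end Polar

section RenyiQuantity

variable {n : Type*} [Fintype n] [DecidableEq n] {ρ σ : Matrix n n ℂ}

lemma eq_of_unitary_mul_mpow_mul_mpow_eq_mpow {N U : Matrix n n ℂ} {a b : ℝ} (hN : N.PosSemidef)
    (hρ : ρ.PosSemidef) (hσ : σ.PosSemidef) (hU : U ∈ unitaryGroup n ℂ) (ha : 0 < a) (hb : 0 < b)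
    (hab : a + b ≤ 1) (hNσ : N.trace = σ.trace) (hρσ : ρ.trace = σ.trace)
    (h : U * (mpow ρ a * mpow σ b) = mpow N (a + b)) : ρ = σ := by
  have hUU : U * Uᴴ = 1 := mem_unitaryGroup_iff.1 hU
  have hUU' : Uᴴ * U = 1 := mem_unitaryGroup_iff'.1 hU
  have hU' : Uᴴ ∈ unitaryGroup n ℂ := Unitary.star_mem hU
  have htr : (mpow N (1 - a - b) * (U * (mpow ρ a * mpow σ b))).trace = σ.trace := by
    rw [h, ← mpow_add hN (by linarith) (by linarith), show 1 - a - b + (a + b) = 1 by ring,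
      mpow_one hN.isHermitian, hNσ]
  rcases lt_or_ge (1 / 2) a with ha2 | ha2
  · refine left_eq_of_trace_holder_equality (s := b) (t := 1 - a - b) (W := Uᴴ * N * Uᴴᴴ) hρ hσ
      (hN.mul_mul_conjTranspose_same _) hU hb (by linarith) (by linarith) (by linarith)
      hρσ.symm ?_ ?_
    · rw [trace_unitary_conj hU', hNσ, hρσ]
    · rw [mpow_unitary_conj hU' hN.isHermitian, hρσ, ← htr, show 1 - b - (1 - a - b) = a by ring,
        ← Matrix.mul_assoc (mpow N _) U, trace_mul_comm (mpow N _ * U), conjTranspose_conjTranspose]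
      simp only [Matrix.mul_assoc]
      rw [← Matrix.mul_assoc U, hUU, Matrix.one_mul]
  rcases lt_or_ge (1 / 2) b with hb2 | hb2
  · refine (left_eq_of_trace_holder_equality (s := a) (t := 1 - a - b) hσ hρ hN hU' ha (by linarith)
      (by linarith) (by linarith) hρσ hNσ ?_).symm
    rw [← htr, ← re_trace_conjTranspose]
    simp only [show 1 - a - (1 - a - b) = b by ring, conjTranspose_mul, conjTranspose_mpow, hρ, hσ,
      hN, conjTranspose_conjTranspose, Matrix.mul_assoc]
  · have hconj := unitary_conj_eq_of_trace_holder_equality (s := a) (t := b) hN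
      (hρ.mul_mul_conjTranspose_same U) hσ hU ha ha2 hb hb2 ?_ hNσ.symm ?_
    · rw [← hconj]
      simp only [Matrix.mul_assoc, hUU', Matrix.mul_one]
      rw [← Matrix.mul_assoc, hUU', Matrix.one_mul]
    · rw [trace_unitary_conj hU, hNσ, hρσ]
    · rw [hNσ, ← htr, mpow_unitary_conj hU hρ.isHermitian]
      simp only [Matrix.mul_assoc]
      rw [← Matrix.mul_assoc Uᴴ, hUU', Matrix.one_mul]

/-- The matrix `σ ^ ((1 - α) / 2z) * ρ ^ (α / z) * σ ^ ((1 - α) / 2z)` whose `z`-th power has trace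
`Q_{α,z}(ρ‖σ)`. -/
noncomputable def renyiKernel (α z : ℝ) (ρ σ : Matrix n n ℂ) : Matrix n n ℂ :=
  mpow σ ((1 - α) / (2 * z)) * mpow ρ (α / z) * mpow σ ((1 - α) / (2 * z))

lemma Qaz_eq_re_trace_mpow_renyiKernel (α z : ℝ) (ρ σ : Matrix n n ℂ) :
    Qaz α z ρ σ = (mpow (renyiKernel α z ρ σ) z).trace.re :=
  rfl

lemma posSemidef_renyiKernel (α z : ℝ) (hρ : ρ.PosSemidef) (hσ : σ.PosSemidef) :
    (renyiKernel α z ρ σ).PosSemidef := by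
  have h := (posSemidef_mpow hρ (α / z)).mul_mul_conjTranspose_same (mpow σ ((1 - α) / (2 * z)))
  rwa [conjTranspose_mpow hσ] at h

lemma Qaz_self {α z : ℝ} (hα0 : 0 ≤ α) (hα1 : α ≤ 1) (hz : 0 < z) (hρ : ρ.PosSemidef) :
    Qaz α z ρ ρ = ρ.trace.re := by
  have hb : 0 ≤ (1 - α) / (2 * z) := div_nonneg (by linarith) (by linarith)
  have ha : 0 ≤ α / z := div_nonneg hα0 hz.le
  have hexp : ((1 - α) / (2 * z) + α / z + (1 - α) / (2 * z)) * z = 1 := by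
    field_simp
    ring
  rw [Qaz, ← mpow_add hρ hb ha, ← mpow_add hρ (by linarith) hb, mpow_mpow hρ, hexp,
    mpow_one hρ.isHermitian]

lemma renyiKernel_smul_smul (α z : ℝ) {c d : ℝ} (hρ : ρ.PosSemidef) (hσ : σ.PosSemidef)
    (hc : 0 ≤ c) (hd : 0 ≤ d) :
    renyiKernel α z (c • ρ) (d • σ)
      = (d ^ ((1 - α) / (2 * z)) * c ^ (α / z) * d ^ ((1 - α) / (2 * z))) •
        renyiKernel α z ρ σ := by
  simp only [renyiKernel, mpow_smul hρ hc, mpow_smul hσ hd, Matrix.smul_mul, Matrix.mul_smul,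
    smul_smul]
  congr 1
  ring

lemma Qaz_smul_smul {α z c d : ℝ} (hz : z ≠ 0) (hρ : ρ.PosSemidef) (hσ : σ.PosSemidef)
    (hc : 0 ≤ c) (hd : 0 ≤ d) :
    Qaz α z (c • ρ) (d • σ) = c ^ α * d ^ (1 - α) * Qaz α z ρ σ := by
  have hscalar : (d ^ ((1 - α) / (2 * z)) * c ^ (α / z) * d ^ ((1 - α) / (2 * z))) ^ z
      = c ^ α * d ^ (1 - α) := by
    rw [mul_right_comm, ← sq, ← Real.rpow_natCast, ← Real.rpow_mul hd, Nat.cast_ofNat,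
      Real.mul_rpow (by positivity) (by positivity), ← Real.rpow_mul hd, ← Real.rpow_mul hc,
      mul_comm]
    congr 2 <;> field_simp
  rw [Qaz_eq_re_trace_mpow_renyiKernel, Qaz_eq_re_trace_mpow_renyiKernel,
    renyiKernel_smul_smul α z hρ hσ hc hd, mpow_smul (posSemidef_renyiKernel α z hρ hσ)
    (by positivity), hscalar, trace_smul, Complex.smul_re, smul_eq_mul]

lemma exists_unitary_mul_mpow_mul_mpow_eq {α z : ℝ} (hα0 : 0 ≤ α) (hz : 0 < z) (hρ : ρ.PosSemidef)
    (hσ : σ.PosSemidef) :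
    ∃ U ∈ unitaryGroup n ℂ, U * (mpow ρ (α / (2 * z)) * mpow σ ((1 - α) / (2 * z)))
      = mpow (renyiKernel α z ρ σ) (1 / 2) := by
  have hK := posSemidef_renyiKernel α z hρ hσ
  have ha : 0 ≤ α / (2 * z) := by positivity
  refine exists_unitary_mul_eq_of_conjTranspose_mul_self_eq ?_
  rw [conjTranspose_mpow hK, mpow_half_mul_self hK, conjTranspose_mul, conjTranspose_mpow hρ,
    conjTranspose_mpow hσ, renyiKernel, show α / z = α / (2 * z) + α / (2 * z) by ring,
    mpow_add hρ ha ha]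
  simp only [Matrix.mul_assoc]

lemma Qaz_eq_re_trace_iff_of_trace_eq {α z : ℝ} (hα0 : 0 < α) (hα1 : α < 1) (hz : 1 / 2 ≤ z)
    (hρ : ρ.PosSemidef) (hσ : σ.PosSemidef) (hρσ : ρ.trace = σ.trace) :
    Qaz α z ρ σ = ρ.trace.re ↔ ρ = σ := by
  have hz0 : 0 < z := by linarith
  refine ⟨fun h ↦ ?_, fun h ↦ h ▸ Qaz_self hα0.le hα1.le hz0 hρ⟩
  obtain ⟨U, hU, hUK⟩ := exists_unitary_mul_mpow_mul_mpow_eq hα0.le hz0 hρ hσ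
  have hK := posSemidef_renyiKernel α z hρ hσ
  have hN := posSemidef_mpow hK z
  have ha : 0 < α / (2 * z) := by positivity
  have hb : 0 < (1 - α) / (2 * z) := div_pos (sub_pos.2 hα1) (by positivity)
  have hab : α / (2 * z) + (1 - α) / (2 * z) = 1 / (2 * z) := by ring
  refine eq_of_unitary_mul_mpow_mul_mpow_eq_mpow hN hρ hσ hU ha hb ?_ ?_ hρσ ?_
  · rw [hab, div_le_one (by linarith)]
    linarith
  · rw [← ofReal_re_trace hN, ← Qaz_eq_re_trace_mpow_renyiKernel, h, ofReal_re_trace hρ, hρσ]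
  · rw [hUK, mpow_mpow hK, hab]
    congr 1
    field_simp

theorem Qaz_eq_trace_rpow_iff_general {α z : ℝ} (hα0 : 0 < α) (hα1 : α < 1) (hz : 1 / 2 ≤ z)
    (hρ : ρ.PosSemidef) (hσ : σ.PosSemidef) (hρ0 : ρ ≠ 0) (hσ0 : σ ≠ 0) :
    Qaz α z ρ σ = ρ.trace.re ^ α * σ.trace.re ^ (1 - α) ↔ σ.trace • ρ = ρ.trace • σ := by
  rw [← ofReal_re_trace hρ, ← ofReal_re_trace hσ, Complex.ofReal_re, Complex.ofReal_re]
  have ht := re_trace_pos hρ hρ0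
  have hu := re_trace_pos hσ hσ0
  set t := ρ.trace.re with ht_def
  set u := σ.trace.re
  have htrace : (u • ρ).trace = (t • σ).trace := by
    rw [trace_smul, trace_smul, ← ofReal_re_trace hρ, ← ofReal_re_trace hσ, Complex.real_smul,
      Complex.real_smul, mul_comm]
  have hscale : u * t = u ^ α * t ^ (1 - α) * (t ^ α * u ^ (1 - α)) := by
    have hsplit {x : ℝ} (hx : 0 < x) : x ^ α * x ^ (1 - α) = x := by
      rw [← Real.rpow_add hx, add_sub_cancel, Real.rpow_one]
    calc u * t = u ^ α * u ^ (1 - α) * (t ^ α * t ^ (1 - α)) := by rw [hsplit hu, hsplit ht]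
      _ = u ^ α * t ^ (1 - α) * (t ^ α * u ^ (1 - α)) := by ring
  have hiff := Qaz_eq_re_trace_iff_of_trace_eq hα0 hα1 hz (hρ.smul hu.le) (hσ.smul ht.le) htrace
  rw [Qaz_smul_smul (by linarith) hρ hσ hu.le ht.le, trace_smul, Complex.smul_re, smul_eq_mul,
    ← ht_def, hscale, mul_right_inj' (by positivity)] at hiff
  exact hiff

end RenyiQuantity

/-- Equality case of strict positivity: for `0 < α < 1`, `z ≥ 1/2` and nonzero
positive semidefinite `ρ, σ`, `Q_{α,z}(ρ‖σ) = (Tr ρ)^α (Tr σ)^{1−α}` iff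
`(Tr σ) ρ = (Tr ρ) σ`. -/
theorem Qaz_eq_trace_rpow_iff (n : ℕ) (α z : ℝ) (hα0 : 0 < α) (hα1 : α < 1)
    (hz : (1 : ℝ) / 2 ≤ z)
    (ρ σ : Matrix (Fin n) (Fin n) ℂ) (hρ : ρ.PosSemidef) (hσ : σ.PosSemidef)
    (hρ0 : ρ ≠ 0) (hσ0 : σ ≠ 0) :
    Qaz α z ρ σ = (ρ.trace.re) ^ α * (σ.trace.re) ^ (1 - α) ↔
      σ.trace • ρ = ρ.trace • σ :=
  Qaz_eq_trace_rpow_iff_general hα0 hα1 hz hρ hσ hρ0 hσ0
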